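/- arXiv:1705.07737 — 7 statements merged into one kernel-verified Lean document; each statement's English description precedes it below -/
import Mathlib

section
/- Let A be an associative unital ℝ-algebra, let i, j ∈ A satisfy i^2 = −1, j^2 = −1, i*j = j*i, let ε : Fin m → ℝ, and let e : Fin m → A pairwise anticommute, each commute with i and with j, and satisfy (e k)^2 = (ε k) • 1. Let Q be the diagonal quadratic form on ℝ^(m+2) (functions Fin (m+2) → ℝ) with coefficients (ε 1, …, ε m, −1, 1). Then there exists an ℝ-algebra homomorphism from the Clifford algebra CliffordAlgebra Q to Matrix (Fin 2) (Fin 2) A sending the k-th generator ι(b k) to E k := !![e k, 0; 0, −(e k)] for k < m, the (m+1)-st generator to !![0, i; i, 0], and the (m+2)-nd generator to !![0, j; −j, 0]. -/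
theorem sum_smul_mul_self_of_anticomm {B : Type*} [Ring B] [Algebra ℝ B] {n : ℕ}
    (c : Fin n → ℝ) (g : Fin n → B)
    (hsq : ∀ k, g k * g k = c k • (1 : B))
    (hac : ∀ k l, k ≠ l → g k * g l = -(g l * g k)) (x : Fin n → ℝ) :
    (∑ k, x k • g k) * (∑ k, x k • g k) = (∑ k, c k * x k ^ 2) • (1 : B) := by
  have h1 : (∑ k, x k • g k) * (∑ k, x k • g k) = ∑ k, ∑ l, (x k * x l) • (g k * g l) := by
    rw [Finset.sum_mul_sum]
    simp only [smul_mul_smul_comm]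
  have h2 : (∑ k, ∑ l, (x k * x l) • (g k * g l)) = ∑ k, ∑ l, (x k * x l) • (g l * g k) := by
    rw [Finset.sum_comm]
    simp only [mul_comm]
  have h3 : (∑ k, ∑ l, (x k * x l) • (g k * g l)) + (∑ k, ∑ l, (x k * x l) • (g l * g k))
      = (2 : ℝ) • ((∑ k, c k * x k ^ 2) • (1 : B)) := by
    simp only [← Finset.sum_add_distrib, ← smul_add]
    rw [Finset.sum_smul, Finset.smul_sum]
    refine Finset.sum_congr rfl fun k _ => ?_
    rw [Finset.sum_eq_single k]
    · rw [hsq, ← two_smul ℝ, smul_smul, smul_smul, smul_smul]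
      congr 1
      ring
    · intro l _ hl
      rw [hac l k hl]
      simp
    · simp
  rw [← h2, ← two_smul ℝ] at h3
  rw [h1]
  exact smul_right_injective B (two_ne_zero : (2 : ℝ) ≠ 0) h3

/-- conformal compactification at the level of Clifford algebras.
Given commuting imaginary units `i, j` in an ℝ-algebra `A` and pairwise
anticommuting elements `e k` (commuting with `i` and `j`) with
`(e k)² = ε k • 1`, and `Q` the diagonal quadratic form on `ℝ^(m+2)` with
coefficients `(ε 0, …, ε (m-1), -1, 1)`, there is an ℝ-algebra homomorphism
`CliffordAlgebra Q →ₐ[ℝ] Matrix (Fin 2) (Fin 2) A` sending the generator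
`ι (Pi.single k 1)` to `!![e k, 0; 0, -(e k)]` for `k < m`, the `(m+1)`-st
generator to `!![0, i; i, 0]` and the `(m+2)`-nd generator to
`!![0, j; -j, 0]`. -/
theorem conformal_compactification_cliffordHom
    {A : Type*} [Ring A] [Algebra ℝ A] {m : ℕ}
    (i j : A) (hi : i ^ 2 = -1) (hj : j ^ 2 = -1) (hij : i * j = j * i)
    (ε : Fin m → ℝ) (e : Fin m → A)
    (he : ∀ k l, k ≠ l → e k * e l = -(e l * e k))
    (hei : ∀ k, e k * i = i * e k) (hej : ∀ k, e k * j = j * e k)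
    (hsq : ∀ k, e k ^ 2 = ε k • (1 : A))
    (Q : QuadraticForm ℝ (Fin (m + 2) → ℝ))
    (hQ : ∀ x, Q x = ∑ μ, (Fin.snoc (Fin.snoc ε (-1)) 1 : Fin (m + 2) → ℝ) μ * x μ ^ 2) :
    ∃ f : CliffordAlgebra Q →ₐ[ℝ] Matrix (Fin 2) (Fin 2) A,
      (∀ k : Fin m,
        f (CliffordAlgebra.ι Q (Pi.single (Fin.castLE (by omega) k) 1)) =
          !![e k, 0; 0, -(e k)]) ∧
      f (CliffordAlgebra.ι Q (Pi.single (⟨m, by omega⟩ : Fin (m + 2)) 1)) =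
        !![0, i; i, 0] ∧
      f (CliffordAlgebra.ι Q (Pi.single (⟨m + 1, by omega⟩ : Fin (m + 2)) 1)) =
        !![0, j; -j, 0] := by
  classical
  let E : Fin m → Matrix (Fin 2) (Fin 2) A := fun k => !![e k, 0; 0, -(e k)]
  let F : Matrix (Fin 2) (Fin 2) A := !![0, i; i, 0]
  let G : Matrix (Fin 2) (Fin 2) A := !![0, j; -j, 0]
  let c : Fin (m + 2) → ℝ := Fin.snoc (Fin.snoc ε (-1) : Fin (m + 1) → ℝ) 1
  let g : Fin (m + 2) → Matrix (Fin 2) (Fin 2) A :=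
    Fin.snoc (Fin.snoc E F : Fin (m + 1) → Matrix (Fin 2) (Fin 2) A) G
  have hone : (1 : Matrix (Fin 2) (Fin 2) A) = !![1, 0; 0, 1] := Matrix.one_fin_two
  have hi' : i * i = -1 := by rw [← pow_two, hi]
  have hj' : j * j = -1 := by rw [← pow_two, hj]
  have hEE : ∀ k, E k * E k = ε k • 1 := fun k => by
    have h : e k * e k = ε k • (1 : A) := by rw [← pow_two, hsq]
    simp [E, hone, h]
  have hFF : F * F = (-1 : ℝ) • 1 := by
    simp [F, hone, hi']
  have hGG : G * G = (1 : ℝ) • 1 := by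
    simp [G, hone, hj']
  have hE : ∀ k l, k ≠ l → E k * E l = -(E l * E k) := fun k l h => by
    simp [E, he k l h]
  have hEF : ∀ k, E k * F = -(F * E k) := fun k => by
    simp [E, F, hei]
  have hEG : ∀ k, E k * G = -(G * E k) := fun k => by
    simp [E, G, hej]
  have hFG : F * G = -(G * F) := by
    simp [F, G, hij]
  have hg0 : ∀ k : Fin m, g k.castSucc.castSucc = E k := fun k => by simp [g]
  have hg1 : g (Fin.last m).castSucc = F := by simp [g]
  have hg2 : g (Fin.last (m + 1)) = G := by simp [g]
  have hc0 : ∀ k : Fin m, c k.castSucc.castSucc = ε k := fun k => by simp [c]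
  have hc1 : c (Fin.last m).castSucc = -1 := by simp [c]
  have hc2 : c (Fin.last (m + 1)) = 1 := by simp [c]
  have hgsq : ∀ k, g k * g k = c k • (1 : Matrix (Fin 2) (Fin 2) A) := by
    intro k
    induction k using Fin.lastCases with
    | last => rw [hg2, hc2, hGG]
    | cast k =>
      induction k using Fin.lastCases with
      | last => rw [hg1, hc1, hFF]
      | cast k => rw [hg0, hc0, hEE]
  have hgac : ∀ k l, k ≠ l → g k * g l = -(g l * g k) := by
    intro k l hkl
    induction k using Fin.lastCases with
    | last =>
      induction l using Fin.lastCases with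
      | last => exact absurd rfl hkl
      | cast l =>
        induction l using Fin.lastCases with
        | last => rw [hg1, hg2, hFG, neg_neg]
        | cast l => rw [hg0, hg2, hEG, neg_neg]
    | cast k =>
      induction k using Fin.lastCases with
      | last =>
        induction l using Fin.lastCases with
        | last => rw [hg1, hg2, hFG]
        | cast l =>
          induction l using Fin.lastCases with
          | last => exact absurd rfl hkl
          | cast l => rw [hg0, hg1, hEF, neg_neg]
      | cast k =>
        induction l using Fin.lastCases with
        | last => rw [hg0, hg2, hEG]
        | cast l =>
          induction l using Fin.lastCases with
          | last => rw [hg0, hg1, hEF]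
          | cast l =>
            rw [hg0, hg0]
            exact hE k l fun h => hkl (by rw [h])
  let L : (Fin (m + 2) → ℝ) →ₗ[ℝ] Matrix (Fin 2) (Fin 2) A := Fintype.linearCombination ℝ g
  have hL : ∀ x, L x * L x = algebraMap ℝ _ (Q x) := fun x => by
    rw [hQ, Algebra.algebraMap_eq_smul_one]
    exact sum_smul_mul_self_of_anticomm c g hgsq hgac x
  have hLs : ∀ k, CliffordAlgebra.lift Q ⟨L, hL⟩ (CliffordAlgebra.ι Q (Pi.single k 1)) = g k :=
    fun k => by
      rw [CliffordAlgebra.lift_ι_apply]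
      simp [L, Fintype.linearCombination_apply_single]
  refine ⟨CliffordAlgebra.lift Q ⟨L, hL⟩, fun k => ?_, ?_, ?_⟩
  · exact (hLs _).trans (hg0 k)
  · exact (hLs _).trans hg1
  · exact (hLs _).trans hg2
end

section
/- Let Q be the quadratic form on ℝ³ (functions Fin 3 → ℝ) given by Q x = −(x 0)^2 − (x 1)^2 + (x 2)^2. Then there exists an ℝ-algebra homomorphism from CliffordAlgebra Q to Matrix (Fin 2) (Fin 2) (ℂ × ℂ) sending the images ι(b k) of the standard basis vectors to e₁, e₂, e₃ respectively. -/
/-- The bicomplex unit `i := (Complex.I, Complex.I)`. -/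
def bcI : ℂ × ℂ := (Complex.I, Complex.I)

/-- The bicomplex unit `j := (Complex.I, -Complex.I)`. -/
def bcJ : ℂ × ℂ := (Complex.I, -Complex.I)

/-- Minkowski paravector generator `e₁ := !![i, 0; 0, -i]`. -/
def mink1 : Matrix (Fin 2) (Fin 2) (ℂ × ℂ) := !![bcI, 0; 0, -bcI]

/-- Minkowski paravector generator `e₂ := !![0, i; i, 0]`. -/
def mink2 : Matrix (Fin 2) (Fin 2) (ℂ × ℂ) := !![0, bcI; bcI, 0]

/-- Minkowski paravector generator `e₃ := !![0, j; -j, 0]`. -/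
def mink3 : Matrix (Fin 2) (Fin 2) (ℂ × ℂ) := !![0, bcJ; -bcJ, 0]

/-- for the quadratic form `Q x = -(x 0)² - (x 1)² + (x 2)²` on
`ℝ³` there is an ℝ-algebra homomorphism `CliffordAlgebra Q →ₐ[ℝ]
Matrix (Fin 2) (Fin 2) (ℂ × ℂ)` sending the images `ι (Pi.single k 1)` of the
standard basis vectors to `e₁, e₂, e₃` respectively. -/
theorem minkowski_cliffordHom
    (Q : QuadraticForm ℝ (Fin 3 → ℝ))
    (hQ : ∀ x, Q x = -(x 0) ^ 2 - (x 1) ^ 2 + (x 2) ^ 2) :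
    ∃ f : CliffordAlgebra Q →ₐ[ℝ] Matrix (Fin 2) (Fin 2) (ℂ × ℂ),
      f (CliffordAlgebra.ι Q (Pi.single 0 1)) = mink1 ∧
      f (CliffordAlgebra.ι Q (Pi.single 1 1)) = mink2 ∧
      f (CliffordAlgebra.ι Q (Pi.single 2 1)) = mink3 := by
  let L : (Fin 3 → ℝ) →ₗ[ℝ] Matrix (Fin 2) (Fin 2) (ℂ × ℂ) :=
    (LinearMap.proj 0).smulRight mink1 + (LinearMap.proj 1).smulRight mink2
      + (LinearMap.proj 2).smulRight mink3
  have hL : ∀ x, L x = x 0 • mink1 + x 1 • mink2 + x 2 • mink3 := fun x => rfl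
  have hsq : ∀ x, L x * L x = algebraMap ℝ _ (Q x) := by
    intro x
    rw [hL, hQ, Algebra.algebraMap_eq_smul_one]
    ext a b <;> fin_cases a <;> fin_cases b <;>
      simp [mink1, mink2, mink3, bcI, bcJ, Matrix.mul_apply, Fin.sum_univ_two, pow_two] <;> ring_nf <;>
      simp only [Complex.I_sq] <;> ring
  refine ⟨CliffordAlgebra.lift Q ⟨L, hsq⟩, ?_, ?_, ?_⟩ <;>
    rw [CliffordAlgebra.lift_ι_apply, hL] <;> simp
end

section
/- Define paravectors E : Fin 4 → Matrix (Fin 2) (Fin 2) (ℂ × ℂ) by E 0 = 1, E k = e k for k = 1, 2, 3, conjugates Ē 0 = 1, Ē k = −(e k), and the spin angular momentum s μ ν := (E μ * Ē ν − E ν * Ē μ) / 4. Then for all μ, ν, ρ, σ : Fin 4 the Lorentz algebra commutation relations hold: [s μ ν, s ρ σ] = (g ν ρ) • s μ σ − (g μ ρ) • s ν σ + (g μ σ) • s ν ρ − (g ν σ) • s μ ρ, where [X, Y] = X*Y − Y*X and g = diag(1, 1, 1, −1). In particular the s μ ν give a representation of the Lie algebra of the Lorentz group SO(3,1). -/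
/-- The paravector `E μ`, with `E 0 = 1`, `E k = e k`. -/
def minkPara : Fin 4 → Matrix (Fin 2) (Fin 2) (ℂ × ℂ) := ![1, mink1, mink2, mink3]

/-- The conjugate paravector `Ē μ`, with `Ē 0 = 1`, `Ē k = -(e k)`. -/
def minkParaBar : Fin 4 → Matrix (Fin 2) (Fin 2) (ℂ × ℂ) :=
  ![1, -mink1, -mink2, -mink3]

/-- The Minkowski metric `g = diag(1, 1, 1, -1)`. -/
def minkMetric : Fin 4 → Fin 4 → ℝ :=
  fun μ ν => if μ = ν then ![1, 1, 1, -1] μ else 0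

/-- The spin angular momentum `s μ ν := (E μ * Ē ν - E ν * Ē μ) / 4`. -/
noncomputable def minkSpin (μ ν : Fin 4) : Matrix (Fin 2) (Fin 2) (ℂ × ℂ) :=
  (1 / 4 : ℝ) • (minkPara μ * minkParaBar ν - minkPara ν * minkParaBar μ)

/-- Clifford relation for `E μ * Ē ν`. -/
lemma mink_cliff (μ ν : Fin 4) :
    minkPara μ * minkParaBar ν =
      (2 * minkMetric μ ν) • (1 : Matrix (Fin 2) (Fin 2) (ℂ × ℂ)) - minkPara ν * minkParaBar μ := by
  fin_cases μ <;> fin_cases ν <;> ext a b <;> fin_cases a <;> fin_cases b <;>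
    simp [minkPara, minkParaBar, minkMetric, mink1, mink2, mink3, bcI, bcJ,
      Matrix.mul_apply, Fin.sum_univ_two, Matrix.one_apply] <;> norm_num

/-- Clifford relation for `Ē μ * E ν`. -/
lemma mink_cliff_bar (μ ν : Fin 4) :
    minkParaBar μ * minkPara ν =
      (2 * minkMetric μ ν) • (1 : Matrix (Fin 2) (Fin 2) (ℂ × ℂ)) - minkParaBar ν * minkPara μ := by
  fin_cases μ <;> fin_cases ν <;> ext a b <;> fin_cases a <;> fin_cases b <;>
    simp [minkPara, minkParaBar, minkMetric, mink1, mink2, mink3, bcI, bcJ,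
      Matrix.mul_apply, Fin.sum_univ_two, Matrix.one_apply] <;> norm_num

lemma minkMetric_comm (μ ν : Fin 4) : minkMetric μ ν = minkMetric ν μ := by
  unfold minkMetric
  by_cases h : μ = ν
  · subst h; rfl
  · rw [if_neg h, if_neg (Ne.symm h)]

lemma minkSpin_eq (μ ν : Fin 4) :
    minkSpin μ ν = (1 / 2 : ℝ) • (minkPara μ * minkParaBar ν) - (minkMetric μ ν / 2) • 1 := by
  rw [minkSpin, mink_cliff ν μ, minkMetric_comm ν μ]
  module

lemma mink_comm (μ ν ρ σ : Fin 4) :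
    (minkPara μ * minkParaBar ν) * (minkPara ρ * minkParaBar σ) =
      (minkPara ρ * minkParaBar σ) * (minkPara μ * minkParaBar ν) +
      ((2 * minkMetric ν ρ) • (minkPara μ * minkParaBar σ)
        - (2 * minkMetric μ ρ) • (minkPara ν * minkParaBar σ)
        + (2 * minkMetric ν σ) • (minkPara ρ * minkParaBar μ)
        - (2 * minkMetric μ σ) • (minkPara ρ * minkParaBar ν)) := by
  have h1 : (minkPara μ * minkParaBar ν) * (minkPara ρ * minkParaBar σ) =
      (2 * minkMetric ν ρ) • (minkPara μ * minkParaBar σ)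
        - (minkPara μ * minkParaBar ρ) * (minkPara ν * minkParaBar σ) := by
    rw [mul_assoc, ← mul_assoc (minkParaBar ν), mink_cliff_bar ν ρ]
    simp only [sub_mul, mul_sub, smul_mul_assoc, mul_smul_comm, one_mul, mul_assoc]
  have h2 : (minkPara μ * minkParaBar ρ) * (minkPara ν * minkParaBar σ) =
      (2 * minkMetric μ ρ) • (minkPara ν * minkParaBar σ)
        - (minkPara ρ * minkParaBar μ) * (minkPara ν * minkParaBar σ) := by
    rw [mink_cliff μ ρ]
    simp only [sub_mul, smul_mul_assoc, one_mul]
  have h3 : (minkPara ρ * minkParaBar μ) * (minkPara ν * minkParaBar σ) =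
      (2 * minkMetric ν σ) • (minkPara ρ * minkParaBar μ)
        - (minkPara ρ * minkParaBar μ) * (minkPara σ * minkParaBar ν) := by
    rw [mink_cliff ν σ]
    simp only [mul_sub, mul_smul_comm, mul_one]
  have h4 : (minkPara ρ * minkParaBar μ) * (minkPara σ * minkParaBar ν) =
      (2 * minkMetric μ σ) • (minkPara ρ * minkParaBar ν)
        - (minkPara ρ * minkParaBar σ) * (minkPara μ * minkParaBar ν) := by
    rw [mul_assoc, ← mul_assoc (minkParaBar μ), mink_cliff_bar μ σ]
    simp only [sub_mul, mul_sub, smul_mul_assoc, mul_smul_comm, one_mul, mul_assoc]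
  rw [h1, h2, h3, h4]
  module

/-- the spin angular momentum operators satisfy the Lorentz
algebra (so(3,1)) commutation relations
`[s μ ν, s ρ σ] = g ν ρ • s μ σ - g μ ρ • s ν σ + g μ σ • s ν ρ - g ν σ • s μ ρ`. -/
theorem minkowski_spin_lorentz_algebra :
    ∀ μ ν ρ σ : Fin 4,
      minkSpin μ ν * minkSpin ρ σ - minkSpin ρ σ * minkSpin μ ν =
        minkMetric ν ρ • minkSpin μ σ - minkMetric μ ρ • minkSpin ν σ +
          minkMetric μ σ • minkSpin ν ρ - minkMetric ν σ • minkSpin μ ρ := by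
  intro μ ν ρ σ
  have e1 := mink_cliff ρ μ
  have e2 := mink_cliff ρ ν
  have hc := mink_comm μ ν ρ σ
  rw [e1, e2] at hc
  simp only [minkSpin_eq, sub_mul, mul_sub, smul_mul_assoc, mul_smul_comm, one_mul, mul_one]
  rw [hc, mink_cliff ν ρ, mink_cliff μ ρ, e1, e2, minkMetric_comm ρ μ, minkMetric_comm ρ ν]
  module
end

section
/- Let B := Matrix (Fin 2) (Fin 2) (ℂ × ℂ) and let E 1, …, E 5 in Matrix (Fin 2) (Fin 2) B be as given. Define paravectors F : Fin 6 → Matrix (Fin 2) (Fin 2) B by F 0 = 1 and F μ = E μ for μ = 1, …, 5, and conjugates F̄ 0 = 1, F̄ μ = −(E μ). Then for all μ, ν : Fin 6, (F μ * F̄ ν + F ν * F̄ μ) / 2 = (g μ ν) • 1 where g is the diagonal matrix diag(1, 1, 1, −1, 1, −1). -/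
/-- Ambient-space generator `E 1 := !![e₁, 0; 0, -e₁]`. -/
def ads1 : Matrix (Fin 2) (Fin 2) (Matrix (Fin 2) (Fin 2) (ℂ × ℂ)) :=
  !![mink1, 0; 0, -mink1]

/-- Ambient-space generator `E 2 := !![e₂, 0; 0, -e₂]`. -/
def ads2 : Matrix (Fin 2) (Fin 2) (Matrix (Fin 2) (Fin 2) (ℂ × ℂ)) :=
  !![mink2, 0; 0, -mink2]

/-- Ambient-space generator `E 3 := !![e₃, 0; 0, -e₃]`. -/
def ads3 : Matrix (Fin 2) (Fin 2) (Matrix (Fin 2) (Fin 2) (ℂ × ℂ)) :=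
  !![mink3, 0; 0, -mink3]

/-- Ambient-space generator `E 4 := !![0, i•1; i•1, 0]`. -/
def ads4 : Matrix (Fin 2) (Fin 2) (Matrix (Fin 2) (Fin 2) (ℂ × ℂ)) :=
  !![0, bcI • 1; bcI • 1, 0]

/-- Ambient-space generator `E 5 := !![0, j•1; -(j•1), 0]`. -/
def ads5 : Matrix (Fin 2) (Fin 2) (Matrix (Fin 2) (Fin 2) (ℂ × ℂ)) :=
  !![0, bcJ • 1; -(bcJ • 1), 0]

/-- The paravector `F μ`, with `F 0 = 1`, `F μ = E μ` for `μ = 1, …, 5`. -/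
def adsPara : Fin 6 → Matrix (Fin 2) (Fin 2) (Matrix (Fin 2) (Fin 2) (ℂ × ℂ)) :=
  ![1, ads1, ads2, ads3, ads4, ads5]

/-- The conjugate paravector `F̄ μ`, with `F̄ 0 = 1`, `F̄ μ = -(E μ)`. -/
def adsParaBar : Fin 6 → Matrix (Fin 2) (Fin 2) (Matrix (Fin 2) (Fin 2) (ℂ × ℂ)) :=
  ![1, -ads1, -ads2, -ads3, -ads4, -ads5]

/-- The ambient metric `g = diag(1, 1, 1, -1, 1, -1)`. -/
def adsMetric : Fin 6 → Fin 6 → ℝ :=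
  fun μ ν => if μ = ν then ![1, 1, 1, -1, 1, -1] μ else 0

theorem bcI_sq : bcI * bcI = -1 := by
  ext <;> simp [bcI]

theorem bcJ_sq : bcJ * bcJ = -1 := by
  ext <;> simp [bcJ]

theorem mink_sq : mink1 * mink1 = -1 ∧ mink2 * mink2 = -1 ∧ mink3 * mink3 = 1 := by
  refine ⟨?_, ?_, ?_⟩ <;>
    simp [mink1, mink2, mink3, Matrix.mul_fin_two, bcI_sq, bcJ_sq, Matrix.one_fin_two]

theorem mink_anti : mink2 * mink1 = -(mink1 * mink2) ∧ mink3 * mink1 = -(mink1 * mink3) ∧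
    mink3 * mink2 = -(mink2 * mink3) := by
  refine ⟨?_, ?_, ?_⟩ <;>
    simp [mink1, mink2, mink3, Matrix.mul_fin_two, mul_comm bcJ bcI]

theorem ads_sq : ads1 * ads1 = -1 ∧ ads2 * ads2 = -1 ∧ ads3 * ads3 = 1 ∧ ads4 * ads4 = -1 ∧
    ads5 * ads5 = 1 := by
  obtain ⟨h1, h2, h3⟩ := mink_sq
  refine ⟨?_, ?_, ?_, ?_, ?_⟩ <;>
    simp [ads1, ads2, ads3, ads4, ads5, Matrix.mul_fin_two, h1, h2, h3, smul_smul, bcI_sq, bcJ_sq,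
      Matrix.one_fin_two (α := Matrix (Fin 2) (Fin 2) (ℂ × ℂ))]

theorem ads_anti : (ads2 * ads1 = -(ads1 * ads2) ∧ ads3 * ads1 = -(ads1 * ads3) ∧
    ads3 * ads2 = -(ads2 * ads3)) ∧ (ads4 * ads1 = -(ads1 * ads4) ∧ ads4 * ads2 = -(ads2 * ads4) ∧
    ads4 * ads3 = -(ads3 * ads4)) ∧ (ads5 * ads1 = -(ads1 * ads5) ∧ ads5 * ads2 = -(ads2 * ads5) ∧
    ads5 * ads3 = -(ads3 * ads5)) ∧ ads5 * ads4 = -(ads4 * ads5) := by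
  obtain ⟨h1, h2, h3⟩ := mink_anti
  refine ⟨⟨?_, ?_, ?_⟩, ⟨?_, ?_, ?_⟩, ⟨?_, ?_, ?_⟩, ?_⟩ <;>
    simp [ads1, ads2, ads3, ads4, ads5, Matrix.mul_fin_two, h1, h2, h3, smul_smul,
      mul_comm bcJ bcI]

theorem half_two {M : Type*} [AddCommGroup M] [Module ℝ M] (x : M) :
    (2⁻¹ : ℝ) • (x + x) = x := by
  rw [← two_smul ℝ x, smul_smul]; norm_num

/-- the real product of the ambient paravectors reproduces the
metric of `ℝ^{4,2}`: `(F μ * F̄ ν + F ν * F̄ μ) / 2 = g μ ν • 1`. -/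
theorem adS_real_product_metric :
    ∀ μ ν : Fin 6,
      (1 / 2 : ℝ) • (adsPara μ * adsParaBar ν + adsPara ν * adsParaBar μ) =
        adsMetric μ ν • (1 : Matrix (Fin 2) (Fin 2) (Matrix (Fin 2) (Fin 2) (ℂ × ℂ))) := by
  obtain ⟨s1, s2, s3, s4, s5⟩ := ads_sq
  obtain ⟨⟨a1, a2, a3⟩, ⟨a4, a5, a6⟩, ⟨a7, a8, a9⟩, a10⟩ := ads_anti
  have hneg : ∀ x : Matrix (Fin 2) (Fin 2) (Matrix (Fin 2) (Fin 2) (ℂ × ℂ)),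
      (2⁻¹ : ℝ) • (-x + -x) = -x := fun x => half_two (-x)
  intro μ ν
  fin_cases μ <;> fin_cases ν <;>
    simp [-smul_add, adsPara, adsParaBar, adsMetric, s1, s2, s3, s4, s5, a1, a2, a3, a4, a5, a6,
      a7, a8, a9, a10, half_two, hneg]
end

section
/- Let Q be the quadratic form on ℝ⁵ (functions Fin 5 → ℝ) given by Q x = −(x 0)^2 − (x 1)^2 + (x 2)^2 − (x 3)^2 + (x 4)^2. Then there exists an ℝ-algebra homomorphism from CliffordAlgebra Q to Matrix (Fin 2) (Fin 2) (Matrix (Fin 2) (Fin 2) (ℂ × ℂ)) sending the images ι(b k) of the standard basis vectors to E 1, E 2, E 3, E 4, E 5 respectively. -/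
set_option maxHeartbeats 4000000 in
/-- The square of a general vector of the ambient space. -/
theorem ads_sq_s13 (a b c d e : ℝ) :
    (a • ads1 + b • ads2 + c • ads3 + d • ads4 + e • ads5) *
      (a • ads1 + b • ads2 + c • ads3 + d • ads4 + e • ads5) =
    (-a ^ 2 - b ^ 2 + c ^ 2 - d ^ 2 + e ^ 2) •
      (1 : Matrix (Fin 2) (Fin 2) (Matrix (Fin 2) (Fin 2) (ℂ × ℂ))) := by
  ext p q r s
  all_goals
    fin_cases p <;> fin_cases q <;> fin_cases r <;> fin_cases s <;>
      simp [ads1, ads2, ads3, ads4, ads5, mink1, mink2, mink3, bcI, bcJ,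
        Matrix.vecMul, dotProduct, Matrix.mul_apply, Fin.sum_univ_two, Matrix.add_apply, Matrix.smul_apply] <;>
      (try ring_nf) <;> (try simp only [Complex.I_sq]) <;> (try ring_nf)

/-- for the quadratic form
`Q x = -(x 0)² - (x 1)² + (x 2)² - (x 3)² + (x 4)²` on `ℝ⁵` there is an
ℝ-algebra homomorphism from `CliffordAlgebra Q` to
`Matrix (Fin 2) (Fin 2) (Matrix (Fin 2) (Fin 2) (ℂ × ℂ))` sending the images
`ι (Pi.single k 1)` of the standard basis vectors to `E 1, …, E 5`. -/
theorem adS_cliffordHom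
    (Q : QuadraticForm ℝ (Fin 5 → ℝ))
    (hQ : ∀ x, Q x = -(x 0) ^ 2 - (x 1) ^ 2 + (x 2) ^ 2 - (x 3) ^ 2 + (x 4) ^ 2) :
    ∃ f : CliffordAlgebra Q →ₐ[ℝ] Matrix (Fin 2) (Fin 2) (Matrix (Fin 2) (Fin 2) (ℂ × ℂ)),
      f (CliffordAlgebra.ι Q (Pi.single 0 1)) = ads1 ∧
      f (CliffordAlgebra.ι Q (Pi.single 1 1)) = ads2 ∧
      f (CliffordAlgebra.ι Q (Pi.single 2 1)) = ads3 ∧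
      f (CliffordAlgebra.ι Q (Pi.single 3 1)) = ads4 ∧
      f (CliffordAlgebra.ι Q (Pi.single 4 1)) = ads5 := by
  let m : (Fin 5 → ℝ) →ₗ[ℝ] Matrix (Fin 2) (Fin 2) (Matrix (Fin 2) (Fin 2) (ℂ × ℂ)) :=
    (LinearMap.proj 0 : (Fin 5 → ℝ) →ₗ[ℝ] ℝ).smulRight ads1 +
    (LinearMap.proj 1 : (Fin 5 → ℝ) →ₗ[ℝ] ℝ).smulRight ads2 +
    (LinearMap.proj 2 : (Fin 5 → ℝ) →ₗ[ℝ] ℝ).smulRight ads3 +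
    (LinearMap.proj 3 : (Fin 5 → ℝ) →ₗ[ℝ] ℝ).smulRight ads4 +
    (LinearMap.proj 4 : (Fin 5 → ℝ) →ₗ[ℝ] ℝ).smulRight ads5
  have hm : ∀ x, m x = x 0 • ads1 + x 1 • ads2 + x 2 • ads3 + x 3 • ads4 + x 4 • ads5 :=
    fun x => rfl
  have hsq : ∀ x, m x * m x = algebraMap ℝ _ (Q x) := by
    intro x
    rw [hm, hQ, Algebra.algebraMap_eq_smul_one]
    exact ads_sq_s13 _ _ _ _ _
  refine ⟨CliffordAlgebra.lift Q ⟨m, hsq⟩, ?_, ?_, ?_, ?_, ?_⟩ <;>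
    rw [CliffordAlgebra.lift_ι_apply, hm] <;> simp
end

section
/- With paravectors F : Fin 6 → Matrix (Fin 2) (Fin 2) (Matrix (Fin 2) (Fin 2) (ℂ × ℂ)) given by F 0 = 1, F μ = E μ (μ = 1, …, 5), conjugates F̄ 0 = 1, F̄ μ = −(E μ), and spin angular momentum s μ ν := (F μ * F̄ ν − F ν * F̄ μ) / 4, the so(4,2)-type commutation relations hold for all μ, ν, ρ, σ : Fin 6: [s μ ν, s ρ σ] = (g ν ρ) • s μ σ − (g μ ρ) • s ν σ + (g μ σ) • s ν ρ − (g ν σ) • s μ ρ, where [X, Y] = X*Y − Y*X and g = diag(1, 1, 1, −1, 1, −1). -/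
/-- The ambient spin angular momentum `s μ ν := (F μ * F̄ ν - F ν * F̄ μ) / 4`. -/
noncomputable def adsSpin (μ ν : Fin 6) :
    Matrix (Fin 2) (Fin 2) (Matrix (Fin 2) (Fin 2) (ℂ × ℂ)) :=
  (1 / 4 : ℝ) • (adsPara μ * adsParaBar ν - adsPara ν * adsParaBar μ)

/-- Paravector form of the Clifford relations implies the `so` commutation relations. -/
theorem spin_abstract {A : Type*} [Ring A] [Algebra ℝ A] {ι : Type*} (F G : ι → A)
    (g : ι → ι → ℝ) (hg : ∀ a b, g a b = g b a)
    (h1 : ∀ a b, F a * G b = (2 * g a b) • (1 : A) - F b * G a)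
    (h2 : ∀ a b, G a * F b = (2 * g a b) • (1 : A) - G b * F a) (m n r s : ι) :
    ((1 / 4 : ℝ) • (F m * G n - F n * G m)) * ((1 / 4 : ℝ) • (F r * G s - F s * G r)) -
      ((1 / 4 : ℝ) • (F r * G s - F s * G r)) * ((1 / 4 : ℝ) • (F m * G n - F n * G m)) =
    g n r • ((1 / 4 : ℝ) • (F m * G s - F s * G m)) -
      g m r • ((1 / 4 : ℝ) • (F n * G s - F s * G n)) +
      g m s • ((1 / 4 : ℝ) • (F n * G r - F r * G n)) -
      g n s • ((1 / 4 : ℝ) • (F m * G r - F r * G m)) := by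
  have key : F m * G n * (F r * G s) - F r * G s * (F m * G n) =
      (2 * g n r) • (F m * G s) - (2 * g m r) • (F n * G s) +
      (2 * g n s) • (F r * G m) - (2 * g m s) • (F r * G n) := by
    have a1 : F m * G n * (F r * G s) = (2 * g n r) • (F m * G s) - F m * G r * (F n * G s) := by
      rw [show F m * G n * (F r * G s) = F m * (G n * F r) * G s by noncomm_ring, h2 n r]
      simp only [mul_sub, sub_mul, mul_smul_comm, smul_mul_assoc, mul_one, mul_assoc]
    have a2 : F m * G r * (F n * G s) = (2 * g m r) • (F n * G s) - F r * G m * (F n * G s) := by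
      rw [h1 m r]
      simp only [sub_mul, smul_mul_assoc, one_mul]
    have a3 : F r * G m * (F n * G s) = (2 * g n s) • (F r * G m) - F r * G m * (F s * G n) := by
      rw [h1 n s]
      simp only [mul_sub, mul_smul_comm, mul_one]
    have a4 : F r * G m * (F s * G n) = (2 * g m s) • (F r * G n) - F r * G s * (F m * G n) := by
      rw [show F r * G m * (F s * G n) = F r * (G m * F s) * G n by noncomm_ring, h2 m s]
      simp only [mul_sub, sub_mul, mul_smul_comm, smul_mul_assoc, mul_one, mul_assoc]
    rw [a1, a2, a3, a4]
    abel
  have e : ∀ a b, (1 / 4 : ℝ) • (F a * G b - F b * G a)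
      = (1 / 2 : ℝ) • (F a * G b) - (g a b / 2) • (1 : A) := by
    intro a b
    rw [h1 b a, hg b a]
    module
  rw [e m n, e r s, e m s, e n s, e n r, e m r]
  have c : ∀ (X Y : A) (x y : ℝ), ((1 / 2 : ℝ) • X - x • (1 : A)) * ((1 / 2 : ℝ) • Y - y • (1 : A))
      - ((1 / 2 : ℝ) • Y - y • (1 : A)) * ((1 / 2 : ℝ) • X - x • (1 : A))
      = (1 / 4 : ℝ) • (X * Y - Y * X) := by
    intro X Y x y
    simp only [mul_sub, sub_mul, mul_smul_comm, smul_mul_assoc, mul_one, one_mul]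
    module
  rw [c, key, h1 r m, h1 r n, hg r m, hg r n, h1 m r, h1 n r]
  module

theorem adsMetric_symm (a b : Fin 6) : adsMetric a b = adsMetric b a := by
  unfold adsMetric
  by_cases h : a = b
  · subst h; rfl
  · rw [if_neg h, if_neg (Ne.symm h)]

theorem one_fin_two_block {R : Type*} [Ring R] : (1 : Matrix (Fin 2) (Fin 2) R) = !![1, 0; 0, 1] :=
  Matrix.one_fin_two

theorem neg_fin_two_block {R : Type*} [Ring R] (a b c d : R) :
    -!![a, b; c, d] = !![-a, -b; -c, -d] := by
  ext p q; fin_cases p <;> fin_cases q <;> rfl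

theorem mink11 : mink1 * mink1 = -1 := by
  simp [mink1, Matrix.mul_fin_two, one_fin_two_block, neg_fin_two_block, bcI_sq]
theorem mink22 : mink2 * mink2 = -1 := by
  simp [mink2, Matrix.mul_fin_two, one_fin_two_block, neg_fin_two_block, bcI_sq]
theorem mink33 : mink3 * mink3 = 1 := by
  simp [mink3, Matrix.mul_fin_two, one_fin_two_block, bcJ_sq]
theorem mink21 : mink2 * mink1 = -(mink1 * mink2) := by
  simp [mink1, mink2, Matrix.mul_fin_two, neg_fin_two_block]
theorem mink31 : mink3 * mink1 = -(mink1 * mink3) := by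
  simp [mink1, mink3, Matrix.mul_fin_two, neg_fin_two_block, mul_comm]
theorem mink32 : mink3 * mink2 = -(mink2 * mink3) := by
  simp [mink2, mink3, Matrix.mul_fin_two, neg_fin_two_block, mul_comm]

/-- Generic block computations, for `D a = diag(a, -a)`. -/
theorem diag_block {R : Type*} [Ring R] (a b : R) :
    !![a, 0; 0, -a] * !![b, 0; 0, -b] = !![a * b, 0; 0, a * b] := by
  simp [Matrix.mul_fin_two]

theorem diag_anti {R : Type*} [Ring R] (a b : R) (h : b * a = -(a * b)) :
    !![b, 0; 0, -b] * !![a, 0; 0, -a] = -(!![a, 0; 0, -a] * !![b, 0; 0, -b]) := by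
  rw [diag_block, diag_block, h, neg_fin_two_block]; simp

theorem off_anti {R : Type*} [Ring R] (a b c : R) (hb : b * a = a * b) (hc : c * a = a * c) :
    !![0, b; c, 0] * !![a, 0; 0, -a] = -(!![a, 0; 0, -a] * !![0, b; c, 0]) := by
  simp [Matrix.mul_fin_two, neg_fin_two_block, hb, hc]

theorem diag_neg_one {R : Type*} [Ring R] : !![(-1 : R), 0; 0, -1] = -1 := by
  rw [one_fin_two_block, neg_fin_two_block]; simp

theorem ads11 : ads1 * ads1 = -1 := by
  rw [ads1, diag_block, mink11, diag_neg_one]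
theorem ads22 : ads2 * ads2 = -1 := by
  rw [ads2, diag_block, mink22, diag_neg_one]
theorem ads33 : ads3 * ads3 = 1 := by
  rw [ads3, diag_block, mink33]; exact one_fin_two_block.symm
theorem ads44 : ads4 * ads4 = -1 := by
  rw [ads4, Matrix.mul_fin_two, ← diag_neg_one]
  simp [smul_smul, bcI_sq]
theorem ads55 : ads5 * ads5 = 1 := by
  refine Eq.trans ?_ one_fin_two_block.symm
  rw [ads5, Matrix.mul_fin_two]
  simp [smul_smul, bcJ_sq]
theorem ads21 : ads2 * ads1 = -(ads1 * ads2) := diag_anti _ _ mink21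
theorem ads31 : ads3 * ads1 = -(ads1 * ads3) := diag_anti _ _ mink31
theorem ads32 : ads3 * ads2 = -(ads2 * ads3) := diag_anti _ _ mink32
theorem ads41 : ads4 * ads1 = -(ads1 * ads4) :=
  off_anti _ _ _ (by simp) (by simp)
theorem ads51 : ads5 * ads1 = -(ads1 * ads5) :=
  off_anti _ _ _ (by simp) (by simp)
theorem ads42 : ads4 * ads2 = -(ads2 * ads4) :=
  off_anti _ _ _ (by simp) (by simp)
theorem ads52 : ads5 * ads2 = -(ads2 * ads5) :=
  off_anti _ _ _ (by simp) (by simp)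
theorem ads43 : ads4 * ads3 = -(ads3 * ads4) :=
  off_anti _ _ _ (by simp) (by simp)
theorem ads53 : ads5 * ads3 = -(ads3 * ads5) :=
  off_anti _ _ _ (by simp) (by simp)
theorem ads54 : ads5 * ads4 = -(ads4 * ads5) := by
  rw [ads4, ads5, Matrix.mul_fin_two, Matrix.mul_fin_two, neg_fin_two_block]
  simp [smul_smul, mul_comm bcJ bcI]

theorem adsPara_rel1 : ∀ a b : Fin 6, adsPara a * adsParaBar b =
    (2 * adsMetric a b) • 1 - adsPara b * adsParaBar a := by
  intro a b
  fin_cases a <;> fin_cases b <;>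
    simp [adsPara, adsParaBar, adsMetric, ads11, ads22, ads33, ads44, ads55, ads21, ads31, ads32,
      ads41, ads42, ads43, ads51, ads52, ads53, ads54] <;> module

theorem adsPara_rel2 : ∀ a b : Fin 6, adsParaBar a * adsPara b =
    (2 * adsMetric a b) • 1 - adsParaBar b * adsPara a := by
  intro a b
  fin_cases a <;> fin_cases b <;>
    simp [adsPara, adsParaBar, adsMetric, ads11, ads22, ads33, ads44, ads55, ads21, ads31, ads32,
      ads41, ads42, ads43, ads51, ads52, ads53, ads54] <;> module

/-- the ambient spin angular momentum operators satisfy the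
so(4,2)-type commutation relations
`[s μ ν, s ρ σ] = g ν ρ • s μ σ - g μ ρ • s ν σ + g μ σ • s ν ρ - g ν σ • s μ ρ`. -/
theorem adS_spin_so42_algebra :
    ∀ μ ν ρ σ : Fin 6,
      adsSpin μ ν * adsSpin ρ σ - adsSpin ρ σ * adsSpin μ ν =
        adsMetric ν ρ • adsSpin μ σ - adsMetric μ ρ • adsSpin ν σ +
          adsMetric μ σ • adsSpin ν ρ - adsMetric ν σ • adsSpin μ ρ := by
  intro μ ν ρ σ
  exact spin_abstract adsPara adsParaBar adsMetric adsMetric_symm adsPara_rel1 adsPara_rel2 μ ν ρ σ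
end

section
/- Under the stated hypotheses on s, for all μ, ν : Fin 4 (viewed inside Fin 6): [q μ, p ν] = 2 • ((g' μ ν) • d + s μ ν), where [X, Y] = X*Y − Y*X. -/
/-- The ambient metric `g = diag(1, 1, 1, -1, 1, -1)` on `ℝ^{4,2}`. -/
def gAmb : Fin 6 → Fin 6 → ℝ :=
  fun μ ν => if μ = ν then ![1, 1, 1, -1, 1, -1] μ else 0

/-- The Minkowski metric `g' = diag(1, 1, 1, -1)`. -/
def gMink : Fin 4 → Fin 4 → ℝ :=
  fun μ ν => if μ = ν then ![1, 1, 1, -1] μ else 0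

/-- The identification of `Fin 4` with the first four indices of `Fin 6`. -/
def emb : Fin 4 → Fin 6 := Fin.castLE (by omega)

/-- if `s : Fin 6 → Fin 6 → A` is antisymmetric and satisfies
the so(4,2) commutation relations, then the Kastrup operators satisfy
`[q μ, p ν] = 2 • (g' μ ν • d + s μ ν)`. -/
theorem conformal_q_p_commutator
    {A : Type*} [Ring A] [Algebra ℝ A]
    (s : Fin 6 → Fin 6 → A)
    (hanti : ∀ μ ν, s μ ν = -(s ν μ))
    (hcomm : ∀ μ ν ρ σ : Fin 6,
      s μ ν * s ρ σ - s ρ σ * s μ ν =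
        gAmb ν ρ • s μ σ - gAmb μ ρ • s ν σ + gAmb μ σ • s ν ρ - gAmb ν σ • s μ ρ)
    (p q : Fin 4 → A) (d : A)
    (hp : ∀ μ, p μ = -(s (emb μ) 4) - s (emb μ) 5)
    (hq : ∀ μ, q μ = s (emb μ) 4 - s (emb μ) 5)
    (hd : d = s 4 5) :
    ∀ μ ν : Fin 4,
      q μ * p ν - p ν * q μ =
        2 • (gMink μ ν • d + s (emb μ) (emb ν)) := by
  intro μ ν
  have hself : ∀ i, s i i = 0 := by
    intro i
    have h2 : (2 : ℝ) • s i i = 0 := by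
      rw [two_smul]
      nth_rewrite 1 [hanti i i]
      exact neg_add_cancel _
    exact (smul_eq_zero_iff_right two_ne_zero).mp h2
  have hg : gAmb (emb μ) (emb ν) = gMink μ ν := by
    fin_cases μ <;> fin_cases ν <;> simp [gAmb, gMink, emb, Fin.ext_iff]
  have ha : ∀ κ : Fin 4, gAmb (emb κ) 4 = 0 ∧ gAmb (emb κ) 5 = 0 ∧
      gAmb 4 (emb κ) = 0 ∧ gAmb 5 (emb κ) = 0 := by
    intro κ
    fin_cases κ <;> simp [gAmb, emb, Fin.ext_iff]
  have h44 : gAmb 4 4 = 1 := by simp [gAmb]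
  have h55 : gAmb 5 5 = -1 := by simp [gAmb]
  have h45 : gAmb 4 5 = 0 := by simp [gAmb]
  have h54 : gAmb 5 4 = 0 := by simp [gAmb]
  obtain ⟨m4, m5, m4', m5'⟩ := ha μ
  obtain ⟨n4, n5, n4', n5'⟩ := ha ν
  have e1 := hcomm (emb μ) 4 (emb ν) 4
  have e2 := hcomm (emb μ) 4 (emb ν) 5
  have e3 := hcomm (emb μ) 5 (emb ν) 4
  have e4 := hcomm (emb μ) 5 (emb ν) 5
  rw [hg, n4', m4, h44, hself] at e1
  rw [hg, n4', m5, h45] at e2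
  rw [hg, n5', m4, h54, hanti 5 4] at e3
  rw [hg, n5', m5, h55, hself] at e4
  have key : q μ * p ν - p ν * q μ =
      -(s (emb μ) 4 * s (emb ν) 4 - s (emb ν) 4 * s (emb μ) 4)
      - (s (emb μ) 4 * s (emb ν) 5 - s (emb ν) 5 * s (emb μ) 4)
      + (s (emb μ) 5 * s (emb ν) 4 - s (emb ν) 4 * s (emb μ) 5)
      + (s (emb μ) 5 * s (emb ν) 5 - s (emb ν) 5 * s (emb μ) 5) := by
    rw [hp, hq]
    noncomm_ring
  rw [key, e1, e2, e3, e4, hd]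
  module
end
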